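/- arXiv:1504.00440 — 2 statements merged into one kernel-verified Lean document; each statement's English description precedes it below -/
import Mathlib

section
/- The degree of the Vorob'ev–Yablonski polynomial Q_n is n(n+1)/2, and Q_n is monic, where Q_n is defined recursively by Q_{n+1} Q_{n−1} = x Q_n^2 − 4(Q_n'' Q_n − (Q_n')^2) with Q_0 = 1, Q_1 = x. -/
open Polynomial

/-- A sequence of complex polynomials satisfies the Vorob'ev-Yablonski recursion if
`Q_0 = 1`, `Q_1 = X` and
`Q_{n+1} Q_{n-1} = x Q_n^2 - 4 (Q_n'' Q_n - (Q_n')^2)` for all `n ≥ 1`. -/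
def IsVY (Q : ℕ → Polynomial ℂ) : Prop :=
  Q 0 = 1 ∧ Q 1 = X ∧
    ∀ n : ℕ, Q (n+2) * Q n =
      X * (Q (n+1))^2 - 4 * (derivative (derivative (Q (n+1))) * Q (n+1) - (derivative (Q (n+1)))^2)

/-!
Consecutive terms `r`, `p`, `q` satisfy, besides `q * r = todaRHS p`, the Hirota equations
`D² r · p = 0` and `D² p · q = 0` and the Wronskian relation `r * q' - r' * q = c * p²` with `c`
constant. At a zero of `p` the recursion reads `q * r = 4 * p'²`, so `q` has no zero in common with
`p` when the zeros of `p` are simple, and then the Wronskian relation shows that those of `q` are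
simple too. At a zero of `p`, the two Hirota equations and their derivatives express
`todaRHS r / r²` and `todaRHS q / q²` by the same formula in `x` and the derivatives of `p`. Since
`p` divides `todaRHS r` by the previous step of the recursion, it divides `todaRHS q`.

This argument needs `2` and the constants `c` to be invertible, so it is run over `ℚ`. The divisors
are monic, hence the divisibility descends to `ℤ`, and from there it passes to every commutative
ring.
-/

namespace VorobevYablonski

section Recursion

variable {R S : Type*} [CommRing R] [CommRing S]

/-- The right-hand side of the Vorob'ev–Yablonski recursion, a form of the Toda equation, as a
function of the middle term. -/
noncomputable def todaRHS (p : R[X]) : R[X] :=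
  X * p ^ 2 - 4 * (derivative (derivative p) * p - derivative p ^ 2)

theorem map_todaRHS (f : R →+* S) (p : R[X]) : (todaRHS p).map f = todaRHS (p.map f) := by
  simp [todaRHS, derivative_map]

theorem natDegree_derivative_terms_le (p : R[X]) :
    (4 * (derivative (derivative p) * p - derivative p ^ 2)).natDegree ≤ 2 * p.natDegree := by
  have h₁ : (derivative p).natDegree ≤ p.natDegree :=
    (natDegree_derivative_le p).trans (Nat.sub_le _ _)
  have h₂ : (derivative (derivative p)).natDegree ≤ p.natDegree :=
    ((natDegree_derivative_le _).trans (Nat.sub_le _ _)).trans h₁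
  refine natDegree_mul_le.trans ?_
  rw [natDegree_ofNat, zero_add]
  refine (natDegree_sub_le _ _).trans (max_le ?_ ?_)
  · exact natDegree_mul_le.trans (by lia)
  · exact natDegree_pow_le.trans (by lia)

theorem natDegree_X_mul_sq [Nontrivial R] {p : R[X]} (hp : p.Monic) :
    (X * p ^ 2).natDegree = 2 * p.natDegree + 1 := by
  rw [monic_X.natDegree_mul (hp.pow 2), hp.natDegree_pow, natDegree_X, add_comm]

theorem natDegree_derivative_terms_lt [Nontrivial R] {p : R[X]} (hp : p.Monic) :
    (4 * (derivative (derivative p) * p - derivative p ^ 2)).natDegree < (X * p ^ 2).natDegree := by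
  rw [natDegree_X_mul_sq hp]
  exact Nat.lt_succ_of_le (natDegree_derivative_terms_le p)

theorem natDegree_todaRHS [Nontrivial R] {p : R[X]} (hp : p.Monic) :
    (todaRHS p).natDegree = 2 * p.natDegree + 1 :=
  (natDegree_sub_eq_left_of_natDegree_lt (natDegree_derivative_terms_lt hp)).trans
    (natDegree_X_mul_sq hp)

theorem monic_todaRHS {p : R[X]} (hp : p.Monic) : (todaRHS p).Monic := by
  nontriviality R
  exact (monic_X.mul (hp.pow 2)).sub_of_left (degree_lt_degree (natDegree_derivative_terms_lt hp))

/-- The Vorob'ev–Yablonski recursion over an arbitrary commutative ring; `IsVY` is the case of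
`ℂ`. -/
def IsVYSeq (Q : ℕ → R[X]) : Prop :=
  Q 0 = 1 ∧ Q 1 = X ∧ ∀ n, Q (n + 2) * Q n = todaRHS (Q (n + 1))

variable (R) in
/-- The Vorob'ev–Yablonski polynomials over `R`, computed by division with remainder. That all
remainders vanish is `isVYSeq_vyPoly`. -/
noncomputable def vyPoly : ℕ → R[X]
  | 0 => 1
  | 1 => X
  | n + 2 => todaRHS (vyPoly (n + 1)) /ₘ vyPoly n

theorem monic_and_natDegree_vyPoly [Nontrivial R] (n : ℕ) :
    (vyPoly R n).Monic ∧ (vyPoly R n).natDegree = (n + 1).choose 2 := by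
  induction n using Nat.twoStepInduction with
  | zero => simp [vyPoly]
  | one => simp [vyPoly, monic_X]
  | more n ih₀ ih₁ =>
    obtain ⟨monic₀, deg₀⟩ := ih₀
    obtain ⟨monic₁, deg₁⟩ := ih₁
    have choose₁ : (n + 2).choose 2 = (n + 1) + (n + 1).choose 2 := by
      rw [Nat.choose_succ_succ', Nat.choose_one_right]
    have choose₂ : (n + 3).choose 2 = (n + 2) + (n + 2).choose 2 := by
      rw [Nat.choose_succ_succ', Nat.choose_one_right]
    have deg_toda := natDegree_todaRHS monic₁
    have deg_le : (vyPoly R n).degree ≤ (todaRHS (vyPoly R (n + 1))).degree := by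
      refine (degree_lt_degree ?_).le
      lia
    constructor
    · rw [vyPoly, Monic, leadingCoeff_divByMonic_of_monic monic₀ deg_le]
      exact monic_todaRHS monic₁
    · rw [vyPoly, natDegree_divByMonic _ monic₀]
      lia

theorem monic_vyPoly (n : ℕ) : (vyPoly R n).Monic := by
  nontriviality R
  exact (monic_and_natDegree_vyPoly n).1

theorem natDegree_vyPoly [Nontrivial R] (n : ℕ) : (vyPoly R n).natDegree = n * (n + 1) / 2 := by
  rw [(monic_and_natDegree_vyPoly n).2, Nat.choose_two_right, Nat.add_sub_cancel, mul_comm]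

theorem map_vyPoly (f : R →+* S) (n : ℕ) : (vyPoly R n).map f = vyPoly S n := by
  induction n using Nat.twoStepInduction with
  | zero => simp [vyPoly]
  | one => simp [vyPoly]
  | more n ih₀ ih₁ => rw [vyPoly, map_divByMonic f (monic_vyPoly n), map_todaRHS, ih₀, ih₁, vyPoly]

theorem vyPoly_mul_of_dvd {n : ℕ} (h : vyPoly R n ∣ todaRHS (vyPoly R (n + 1))) :
    vyPoly R (n + 2) * vyPoly R n = todaRHS (vyPoly R (n + 1)) := by
  obtain ⟨s, hs⟩ := h
  rw [vyPoly, hs, mul_divByMonic_cancel_left _ (monic_vyPoly n), mul_comm]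

theorem IsVYSeq.eq_vyPoly {Q : ℕ → R[X]} (hQ : IsVYSeq Q) (n : ℕ) : Q n = vyPoly R n := by
  obtain ⟨zero, one, toda⟩ := hQ
  induction n using Nat.twoStepInduction with
  | zero => rw [zero, vyPoly]
  | one => rw [one, vyPoly]
  | more n ih₀ ih₁ =>
    rw [vyPoly, ← ih₁, ← toda n, ih₀, mul_comm, mul_divByMonic_cancel_left _ (monic_vyPoly n)]

end Recursion

section Hirota

variable {R : Type*} [CommRing R] {c : R} {r p q s : R[X]}

/-- Hirota's bilinear expression `D² p · q`. -/
noncomputable def hirotaSq (p q : R[X]) : R[X] :=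
  derivative (derivative p) * q - 2 * (derivative p * derivative q) +
    p * derivative (derivative q)

theorem hirotaSq_comm (p q : R[X]) : hirotaSq p q = hirotaSq q p := by
  unfold hirotaSq
  ring

/-- The value of `p'² * todaRHS q / q²` at the zeros of `p`, when `D² p · q = 0`; it does not
involve `q`. -/
noncomputable def rootObstruction (p : R[X]) : R[X] :=
  X * derivative p ^ 2 + 3 * derivative (derivative p) ^ 2 -
    4 * (derivative p * derivative (derivative (derivative p)))

theorem dvd_sq_mul_todaRHS_sub_sq_mul_rootObstruction (h : hirotaSq p q = 0) :
    p ∣ derivative p ^ 2 * todaRHS q - q ^ 2 * rootObstruction p := by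
  have h' := congrArg derivative h
  simp only [hirotaSq, derivative_add, derivative_sub, derivative_mul, derivative_ofNat,
    derivative_zero] at h h'
  refine ⟨-4 * q * derivative p * derivative (derivative (derivative q)) +
    (2 * derivative q * derivative p + 3 * q * derivative (derivative p)) *
      derivative (derivative q), ?_⟩
  unfold todaRHS rootObstruction
  linear_combination 4 * q * derivative p * h' -
    (2 * derivative q * derivative p + 3 * q * derivative (derivative p)) * h

theorem dvd_todaRHS_iff_dvd_rootObstruction (hp : p.Separable) (hpq : IsCoprime p q)
    (h : hirotaSq p q = 0) : p ∣ todaRHS q ↔ p ∣ rootObstruction p := by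
  have key := dvd_iff_dvd_of_dvd_sub (dvd_sq_mul_todaRHS_sub_sq_mul_rootObstruction h)
  exact ⟨fun ht => hpq.pow_right.dvd_of_dvd_mul_left (key.mp (ht.mul_left _)),
    fun ho => IsCoprime.dvd_of_dvd_mul_left (IsCoprime.pow_right hp) (key.mpr (ho.mul_left _))⟩

theorem mul_hirotaSq_eq_zero (hirota : hirotaSq r p = 0) (wr : wronskian r q = C c * p ^ 2) :
    r * hirotaSq p q = 0 := by
  have wr' := congrArg derivative wr
  simp only [wronskian, hirotaSq, derivative_sub, derivative_mul, derivative_C, derivative_pow,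
    Nat.cast_ofNat, map_ofNat, Nat.add_one_sub_one, pow_one] at wr wr' hirota ⊢
  linear_combination p * wr' - 2 * derivative p * wr + q * hirota

theorem isCoprime_of_mul_eq_todaRHS (four : IsUnit (4 : R)) (hp : p.Separable)
    (toda : q * r = todaRHS p) : IsCoprime p q := by
  have four' : IsUnit (4 : R[X]) := by
    simpa only [map_ofNat] using four.map (C : R →+* R[X])
  have sq : IsCoprime p (4 * derivative p ^ 2) :=
    (isCoprime_mul_unit_left_right four' _ _).mpr (IsCoprime.pow_right hp)
  have eq : q * r = 4 * derivative p ^ 2 + p * (X * p - 4 * derivative (derivative p)) := by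
    rw [toda, todaRHS]
    ring
  have mul : IsCoprime p (q * r) := eq ▸ sq.add_mul_left_right _
  exact mul.of_mul_right_left

theorem separable_of_wronskian_eq (hc : IsUnit c) (hpq : IsCoprime p q)
    (wr : wronskian r q = C c * p ^ 2) : q.Separable := by
  have sq : IsCoprime q (C c * p ^ 2) :=
    (isCoprime_mul_unit_left_right (isUnit_C.mpr hc) _ _).mpr hpq.symm.pow_right
  have eq : r * derivative q = C c * p ^ 2 + q * derivative r := by
    rw [← wr, wronskian]
    ring
  have mul : IsCoprime q (r * derivative q) := eq ▸ sq.add_mul_left_right _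
  exact mul.of_mul_right_right

theorem derivative_wronskian (p q : R[X]) :
    derivative (wronskian p q) = p * derivative (derivative q) - derivative (derivative p) * q := by
  simp only [wronskian, derivative_sub, derivative_mul]
  ring

theorem mul_cube_add_mul_cube_eq (hirota : hirotaSq p q = 0) (toda_p : q * r = todaRHS p)
    (toda_q : s * p = todaRHS q) :
    s * p ^ 3 + r * q ^ 3 = 2 * X * p ^ 2 * q ^ 2 + 4 * wronskian p q ^ 2 := by
  unfold hirotaSq at hirota
  unfold todaRHS at toda_p toda_q
  unfold wronskian
  linear_combination p ^ 2 * toda_q - 4 * p * q * hirota + q ^ 2 * toda_p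

theorem mul_sq_eq_wronskian (hirota : hirotaSq p q = 0) (toda_p : q * r = todaRHS p) :
    r * q ^ 2 = X * p ^ 2 * q - 4 * derivative p * wronskian p q +
      2 * p * derivative (wronskian p q) := by
  rw [derivative_wronskian]
  unfold hirotaSq at hirota
  unfold todaRHS at toda_p
  unfold wronskian
  linear_combination q * toda_p - 2 * p * hirota

theorem cube_mul_wronskian_eq (hirota : hirotaSq p q = 0) (toda_p : q * r = todaRHS p)
    (toda_q : s * p = todaRHS q) (wr : wronskian r q = C c * p ^ 2) :
    p ^ 3 * wronskian p s = p ^ 3 * (C (c + 2) * q ^ 2) := by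
  have cubes := mul_cube_add_mul_cube_eq hirota toda_p toda_q
  have cubes' := congrArg derivative cubes
  have sq := mul_sq_eq_wronskian hirota toda_p
  simp only [derivative_add, derivative_mul, derivative_pow, derivative_ofNat, derivative_X,
    Nat.cast_ofNat, map_ofNat, Nat.add_one_sub_one, pow_one] at cubes'
  rw [derivative_wronskian] at sq cubes'
  simp only [wronskian, C_add, map_ofNat] at cubes cubes' sq wr ⊢
  linear_combination p * cubes' - 4 * derivative p * cubes + p * q ^ 2 * wr -
    4 * (p * derivative q - derivative p * q) * sq

/-- The relations between three consecutive Vorob'ev–Yablonski polynomials `r`, `p`, `q` that are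
propagated along the recursion. The field `dvd` records that `p` is a factor in the preceding
step of the recursion. -/
structure IsVYTriple (c : R) (r p q : R[X]) : Prop where
  monic_left : r.Monic
  monic_mid : p.Monic
  separable : p.Separable
  coprime : IsCoprime r p
  hirota : hirotaSq r p = 0
  dvd : p ∣ todaRHS r
  toda : q * r = todaRHS p
  wronskian_eq : wronskian r q = C c * p ^ 2

namespace IsVYTriple

theorem hirota_next (h : IsVYTriple c r p q) : hirotaSq p q = 0 :=
  h.monic_left.mul_right_eq_zero_iff.mp (mul_hirotaSq_eq_zero h.hirota h.wronskian_eq)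

theorem coprime_next (four : IsUnit (4 : R)) (h : IsVYTriple c r p q) : IsCoprime p q :=
  isCoprime_of_mul_eq_todaRHS four h.separable h.toda

theorem dvd_todaRHS (four : IsUnit (4 : R)) (h : IsVYTriple c r p q) : p ∣ todaRHS q := by
  have obstruction : p ∣ rootObstruction p :=
    (dvd_todaRHS_iff_dvd_rootObstruction h.separable h.coprime.symm
      ((hirotaSq_comm p r).trans h.hirota)).mp h.dvd
  exact (dvd_todaRHS_iff_dvd_rootObstruction h.separable (h.coprime_next four)
    h.hirota_next).mpr obstruction

theorem next (four : IsUnit (4 : R)) (hc : IsUnit c) (h : IsVYTriple c r p q)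
    (toda_next : s * p = todaRHS q) : IsVYTriple (c + 2) p q s where
  monic_left := h.monic_mid
  monic_mid := h.monic_left.of_mul_monic_right (h.toda ▸ monic_todaRHS h.monic_mid)
  separable := separable_of_wronskian_eq hc (h.coprime_next four) h.wronskian_eq
  coprime := h.coprime_next four
  hirota := h.hirota_next
  dvd := h.toda ▸ dvd_mul_right q r
  toda := toda_next
  wronskian_eq := (h.monic_mid.pow 3).isRegular.left
    (cube_mul_wronskian_eq h.hirota_next h.toda toda_next h.wronskian_eq)

theorem one_X_todaRHS_X : IsVYTriple (3 : R) 1 X (todaRHS X) where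
  monic_left := monic_one
  monic_mid := monic_X
  separable := separable_X
  coprime := isCoprime_one_left
  hirota := by simp [hirotaSq]
  dvd := by simp [todaRHS]
  toda := mul_one _
  wronskian_eq := by
    simp only [wronskian, todaRHS, derivative_one, derivative_X, derivative_sub, derivative_mul,
      derivative_pow, derivative_zero, derivative_ofNat, map_ofNat, Nat.cast_ofNat,
      Nat.add_one_sub_one, pow_one]
    ring

end IsVYTriple

end Hirota

section Existence

theorem isVYTriple_vyPoly (K : Type*) [Field K] [CharZero K] (n : ℕ) :
    IsVYTriple (2 * n + 3 : K) (vyPoly K n) (vyPoly K (n + 1)) (vyPoly K (n + 2)) := by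
  induction n with
  | zero => simpa [vyPoly] using IsVYTriple.one_X_todaRHS_X (R := K)
  | succ n ih =>
    have four : IsUnit (4 : K) := IsUnit.mk0 4 (by norm_num)
    have hc : IsUnit (2 * n + 3 : K) := IsUnit.mk0 _ (by exact_mod_cast (2 * n + 2).succ_ne_zero)
    convert ih.next four hc (vyPoly_mul_of_dvd (ih.dvd_todaRHS four)) using 1
    push_cast
    ring

theorem vyPoly_int_dvd_todaRHS (n : ℕ) : vyPoly ℤ n ∣ todaRHS (vyPoly ℤ (n + 1)) := by
  rw [← map_dvd_map (Int.castRingHom ℚ) Int.cast_injective (monic_vyPoly n), map_todaRHS,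
    map_vyPoly, map_vyPoly, ← (isVYTriple_vyPoly ℚ n).toda]
  exact dvd_mul_left _ _

variable (R : Type*) [CommRing R]

theorem vyPoly_dvd_todaRHS (n : ℕ) : vyPoly R n ∣ todaRHS (vyPoly R (n + 1)) := by
  simpa only [map_todaRHS, map_vyPoly] using
    Polynomial.map_dvd (Int.castRingHom R) (vyPoly_int_dvd_todaRHS n)

theorem isVYSeq_vyPoly : IsVYSeq (vyPoly R) :=
  ⟨by rw [vyPoly], by rw [vyPoly], fun n => vyPoly_mul_of_dvd (vyPoly_dvd_todaRHS R n)⟩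

end Existence

end VorobevYablonski

open VorobevYablonski in
theorem stmt_4_general (R : Type*) [CommRing R] [Nontrivial R] :
    (∃ Q : ℕ → R[X], IsVYSeq Q) ∧
      ∀ Q : ℕ → R[X], IsVYSeq Q → ∀ n : ℕ,
        (Q n).Monic ∧ (Q n).natDegree = n * (n + 1) / 2 := by
  refine ⟨⟨vyPoly R, isVYSeq_vyPoly R⟩, fun Q hQ n => ?_⟩
  rw [hQ.eq_vyPoly n]
  exact ⟨monic_vyPoly n, natDegree_vyPoly n⟩

/-- the Vorob'ev-Yablonski recursion produces polynomials
(existence of a polynomial solution), and every polynomial solution `Q_n` is monic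
of degree `n(n+1)/2`. -/
theorem stmt_4 :
    (∃ Q : ℕ → Polynomial ℂ, IsVY Q) ∧
      ∀ Q : ℕ → Polynomial ℂ, IsVY Q → ∀ n : ℕ,
        (Q n).Monic ∧ (Q n).natDegree = n * (n+1) / 2 :=
  stmt_4_general ℂ
end

section
/- For every n ≥ 1 and all complex parameters t_1, t_3, t_5, ..., the square of the staircase Schur polynomial satisfies s_{δ_n}(t_1, 0, 2^2 t_3, 0, 2^4 t_5, 0, ...)^2 = 2^{n^2} · s_{(n+1)^n}(t_1, 0, t_3, 0, t_5, 0, ...), where (n+1)^n is the rectangular partition with n rows of length n+1. -/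
open scoped BigOperators

/-- Complete homogeneous functions `h_k(t)` defined via the generating series
`∑ h_k(t) z^k = exp(∑_{j≥1} t_j z^j)`, encoded through the equivalent recursion
`(k+1) h_{k+1} = ∑_{j=1}^{k+1} j t_j h_{k+1-j}` obtained by differentiating the series. -/
noncomputable def hh (t : ℕ → ℂ) : ℕ → ℂ
  | 0 => 1
  | (k+1) => ((k : ℂ) + 1)⁻¹ * ∑ i ∈ Finset.range (k+1), ((i : ℂ) + 1) * t (i+1) * hh t (k - i)
decreasing_by exact Nat.lt_succ_of_le (Nat.sub_le k i)

/-- `h_k(t)` extended to integer indices, with `h_k = 0` for `k < 0`. -/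
noncomputable def hZ (t : ℕ → ℂ) (m : ℤ) : ℂ := if m < 0 then 0 else hh t m.toNat

/-- Schur polynomial via the Jacobi-Trudi determinant
`s_λ(t) = det[h_{λ_j - j + k}(t)]_{j,k=1}^{ℓ}`. -/
noncomputable def schur (ℓ : ℕ) (lam : Fin ℓ → ℕ) (t : ℕ → ℂ) : ℂ :=
  Matrix.det (Matrix.of fun j k : Fin ℓ => hZ t ((lam j : ℤ) - ((j : ℕ) + 1) + ((k : ℕ) + 1)))

/-!
For a series `F` with `F(z) F(-z) = 1`, the terms of odd and of even index contribute equally to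
each positive coefficient of `F(z)²`. If `S` is the Jacobi–Trudi matrix of the staircase `δ_n`
built on `F`, and `Sʳ` is `S` with the order of its rows and columns reversed, then an entry of
`(Sʳ)ᵀ S` is precisely one of these half sums, so `2 (Sʳ)ᵀ S` is the Jacobi–Trudi matrix of the
rectangle `(n+1)ⁿ` built on `F²`. Taking determinants expresses the rectangle through the square
of the staircase.

For `F = exp (∑ 2 ^ (j - 1) t_j z ^ j)` with `t` supported on odd indices, `F(z) F(-z) = 1`, and
`F(z)²` is the generating series of the `h_k(t)` at `2z`.
-/

namespace SchurPolynomial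

open PowerSeries LaurentSeries Finset

section LogarithmicDerivative

variable {R : Type*} [CommSemiring R]

lemma derivative_rescale (a : R) (F : R⟦X⟧) :
    d⁄dX R (rescale a F) = C a * rescale a (d⁄dX R F) := by
  ext k
  simp only [coeff_derivative, coeff_rescale, coeff_C_mul]
  ring

lemma eq_of_derivative_eq_mul [IsAddTorsionFree R] {F G P : R⟦X⟧}
    (hF : d⁄dX R F = P * F) (hG : d⁄dX R G = P * G)
    (h₀ : constantCoeff F = constantCoeff G) : F = G := by
  ext k
  induction k using Nat.strong_induction_on with
  | _ k ih =>
    cases k with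
    | zero => simpa only [coeff_zero_eq_constantCoeff_apply] using h₀
    | succ k =>
      have coeff_succ {H : R⟦X⟧} (hH : d⁄dX R H = P * H) :
          (k + 1) • coeff (k + 1) H = ∑ p ∈ antidiagonal k, coeff p.1 P * coeff p.2 H := by
        rw [← coeff_mul, ← hH, coeff_derivative, nsmul_eq_mul, mul_comm, Nat.cast_succ]
      apply nsmul_right_injective k.succ_ne_zero
      change (k + 1) • coeff (k + 1) F = (k + 1) • coeff (k + 1) G
      rw [coeff_succ hF, coeff_succ hG]
      refine sum_congr rfl fun p hp ↦ ?_
      rw [ih p.2 (Finset.Nat.antidiagonal.snd_lt hp)]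

end LogarithmicDerivative

section JacobiTrudi

variable {R : Type*} [CommRing R] {F : R⟦X⟧}

/-- The Jacobi–Trudi determinant `det[F_{λ_j - j + k}]` on the coefficients of a power series `F`;
the Schur polynomial is the case `F = ∑ h_k z ^ k`. Passing to Laurent series makes the
coefficients of negative index vanish. -/
noncomputable def jacobiTrudi (F : R⟦X⟧) {ℓ : ℕ} (lam : Fin ℓ → ℕ) : R :=
  (Matrix.of fun j k : Fin ℓ ↦ (F : R⸨X⸩).coeff ((lam j : ℤ) - (j : ℕ) + (k : ℕ))).det

lemma jacobiTrudi_rescale {a : R} (ha : IsLeftRegular a) (F : R⟦X⟧) {ℓ : ℕ} (lam : Fin ℓ → ℕ) :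
    jacobiTrudi (rescale a F) lam = a ^ (∑ j, lam j) * jacobiTrudi F lam := by
  have pow_mul_coeff (j k : Fin ℓ) :
      a ^ (j : ℕ) * (rescale a F : R⸨X⸩).coeff ((lam j : ℤ) - (j : ℕ) + (k : ℕ)) =
        a ^ lam j * (a ^ (k : ℕ) * (F : R⸨X⸩).coeff ((lam j : ℤ) - (j : ℕ) + (k : ℕ))) := by
    rcases lt_or_ge ((lam j : ℤ) - (j : ℕ) + (k : ℕ)) 0 with hneg | hnonneg
    · simp only [coeff_coe, if_pos hneg, mul_zero]
    · obtain ⟨m, hm⟩ := Int.eq_ofNat_of_zero_le hnonneg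
      rw [hm, coeff_coe_powerSeries, coeff_coe_powerSeries, coeff_rescale, ← mul_assoc,
        ← mul_assoc, ← pow_add, ← pow_add, show (j : ℕ) + m = lam j + k by omega]
  apply ha.pow (∑ j : Fin ℓ, (j : ℕ))
  simp only [jacobiTrudi, ← prod_pow_eq_pow_sum]
  rw [← Matrix.det_mul_column, mul_left_comm, ← Matrix.det_mul_row, ← Matrix.det_mul_column]
  simp only [Matrix.of_apply, pow_mul_coeff]

lemma two_mul_sum_coeff_mul_coeff_of_odd_add (hF : evalNegHom F * F = 1) {m : ℕ} (hm : m ≠ 0)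
    (j : ℕ) :
    2 * ∑ p ∈ antidiagonal m with Odd (p.1 + j), coeff p.1 F * coeff p.2 F = coeff m (F ^ 2) := by
  have alternating_sum : ∑ p ∈ antidiagonal m, (-1) ^ p.1 * coeff p.1 F * coeff p.2 F = 0 := by
    simpa only [evalNegHom, coeff_mul, coeff_rescale, coeff_one, if_neg hm] using
      congrArg (coeff m) hF
  calc 2 * ∑ p ∈ antidiagonal m with Odd (p.1 + j), coeff p.1 F * coeff p.2 F
      = ∑ p ∈ antidiagonal m, (1 - (-1) ^ (p.1 + j)) * (coeff p.1 F * coeff p.2 F) := by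
        rw [sum_filter, mul_sum]
        refine sum_congr rfl fun p _ ↦ ?_
        rcases Nat.even_or_odd (p.1 + j) with h | h
        · rw [if_neg (Nat.not_odd_iff_even.2 h), h.neg_one_pow]
          ring
        · rw [if_pos h, h.neg_one_pow]
          ring
    _ = ∑ p ∈ antidiagonal m, coeff p.1 F * coeff p.2 F -
          (-1) ^ j * ∑ p ∈ antidiagonal m, (-1) ^ p.1 * coeff p.1 F * coeff p.2 F := by
        rw [mul_sum, ← sum_sub_distrib]
        exact sum_congr rfl fun p _ ↦ by ring
    _ = coeff m (F ^ 2) := by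
        rw [alternating_sum, mul_zero, sub_zero, sq, coeff_mul]

lemma sum_coeff_mul_coeff_eq_sum_odd_add (F : R⟦X⟧) {n m j : ℕ} (h : m + j ≤ 2 * n) :
    ∑ i : Fin n, (F : R⸨X⸩).coeff (2 * (i : ℕ) + 1 - j : ℤ) *
        (F : R⸨X⸩).coeff (m + j - (2 * (i : ℕ) + 1) : ℤ) =
      ∑ p ∈ antidiagonal m with Odd (p.1 + j), coeff p.1 F * coeff p.2 F := by
  rw [Fin.sum_univ_eq_sum_range (fun i : ℕ ↦ (F : R⸨X⸩).coeff (2 * i + 1 - j : ℤ) *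
    (F : R⸨X⸩).coeff (m + j - (2 * i + 1) : ℤ))]
  symm
  have index_eq {p : ℕ × ℕ} (hp : p ∈ {p ∈ antidiagonal m | Odd (p.1 + j)}) :
      p.1 + p.2 = m ∧ p.1 + j = 2 * ((p.1 + j) / 2) + 1 := by
    rw [mem_filter, HasAntidiagonal.mem_antidiagonal] at hp
    exact ⟨hp.1, (Nat.two_mul_div_two_add_one_of_odd hp.2).symm⟩
  refine sum_of_injOn (fun p ↦ (p.1 + j) / 2) ?_ ?_ ?_ ?_
  · intro p hp q hq hpq
    obtain ⟨hp_sum, hp_odd⟩ := index_eq hp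
    obtain ⟨hq_sum, hq_odd⟩ := index_eq hq
    have div_eq : (p.1 + j) / 2 = (q.1 + j) / 2 := hpq
    exact Prod.ext (by omega) (by omega)
  · intro p hp
    obtain ⟨hsum, hodd⟩ := index_eq hp
    simp only [coe_range, Set.mem_Iio]
    omega
  · -- For `i` outside the image, one of the two coefficients has negative index.
    intro i _ hi
    by_cases hneg : (2 * i + 1 - j : ℤ) < 0 ∨ (m + j - (2 * i + 1) : ℤ) < 0
    · rcases hneg with hneg | hneg <;> simp only [coeff_coe, if_pos hneg, zero_mul, mul_zero]
    · refine absurd ⟨(2 * i + 1 - j, m + j - (2 * i + 1)), ?_, ?_⟩ hi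
      · rw [mem_coe, mem_filter, HasAntidiagonal.mem_antidiagonal]
        exact ⟨by omega, i, by omega⟩
      · change (2 * i + 1 - j + j) / 2 = i
        omega
  · intro p hp
    obtain ⟨hsum, hodd⟩ := index_eq hp
    rw [← coeff_coe_powerSeries, ← coeff_coe_powerSeries]
    congr 2 <;> omega

theorem two_pow_mul_jacobiTrudi_staircase_sq (hF : evalNegHom F * F = 1) (n : ℕ) :
    2 ^ n * jacobiTrudi F (fun i : Fin n ↦ n - (i : ℕ)) ^ 2 =
      jacobiTrudi (F ^ 2) (fun _ : Fin n ↦ n + 1) := by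
  set S : Matrix (Fin n) (Fin n) R := Matrix.of fun j k ↦
    (F : R⸨X⸩).coeff (((n - (j : ℕ) : ℕ) : ℤ) - (j : ℕ) + (k : ℕ)) with hS
  have two_smul_mul : (2 : R) • ((S.submatrix Fin.revPerm Fin.revPerm).transpose * S) =
      Matrix.of fun j k : Fin n ↦
        ((F ^ 2 : R⟦X⟧) : R⸨X⸩).coeff (((n + 1 : ℕ) : ℤ) - (j : ℕ) + (k : ℕ)) := by
    ext j k
    obtain ⟨m, hm⟩ : ∃ m : ℕ, m + (j : ℕ) = n + 1 + k := ⟨n + 1 + k - j, by omega⟩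
    have rect_index : ((n + 1 : ℕ) : ℤ) - (j : ℕ) + (k : ℕ) = m := by omega
    rw [Matrix.smul_apply, smul_eq_mul, Matrix.mul_apply, Matrix.of_apply, rect_index,
      coeff_coe_powerSeries, ← two_mul_sum_coeff_mul_coeff_of_odd_add hF (by omega) j,
      ← sum_coeff_mul_coeff_eq_sum_odd_add F (n := n) (by omega)]
    congr 1
    refine sum_congr rfl fun i _ ↦ ?_
    simp only [hS, Matrix.transpose_apply, Matrix.submatrix_apply, Matrix.of_apply,
      Fin.revPerm_apply, Fin.val_rev]
    congr 2 <;> omega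
  calc 2 ^ n * jacobiTrudi F (fun i : Fin n ↦ n - (i : ℕ)) ^ 2
      = ((2 : R) • ((S.submatrix Fin.revPerm Fin.revPerm).transpose * S)).det := by
        rw [Matrix.det_smul, Fintype.card_fin, Matrix.det_mul, Matrix.det_transpose,
          Matrix.det_submatrix_equiv_self, ← sq, jacobiTrudi]
    _ = jacobiTrudi (F ^ 2) (fun _ : Fin n ↦ n + 1) := by rw [two_smul_mul, jacobiTrudi]

end JacobiTrudi

section CompleteHomogeneous

/-- The generating series `∑ h_k(t) z ^ k = exp (∑_{j ≥ 1} t_j z ^ j)` of the complete homogeneous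
functions. -/
noncomputable def hSeries (t : ℕ → ℂ) : ℂ⟦X⟧ := mk (hh t)

lemma constantCoeff_hSeries (t : ℕ → ℂ) : constantCoeff (hSeries t) = 1 := by
  rw [hSeries, constantCoeff_mk, hh]

lemma derivative_hSeries (t : ℕ → ℂ) :
    d⁄dX ℂ (hSeries t) = d⁄dX ℂ (mk t) * hSeries t := by
  ext k
  have hk : (k : ℂ) + 1 ≠ 0 := Nat.cast_add_one_ne_zero k
  rw [coeff_derivative, coeff_mul, Finset.Nat.sum_antidiagonal_eq_sum_range_succ_mk]
  simp only [hSeries, coeff_derivative, coeff_mk]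
  rw [hh, mul_comm, mul_inv_cancel_left₀ hk]
  exact sum_congr rfl fun i _ ↦ by ring

lemma eq_hSeries {t : ℕ → ℂ} {F : ℂ⟦X⟧} (hF : d⁄dX ℂ F = d⁄dX ℂ (mk t) * F)
    (h₀ : constantCoeff F = 1) : F = hSeries t :=
  eq_of_derivative_eq_mul hF (derivative_hSeries t) (h₀.trans (constantCoeff_hSeries t).symm)

lemma hSeries_zero : hSeries 0 = 1 := by
  refine (eq_hSeries ?_ (map_one _)).symm
  have mk_zero : (mk 0 : ℂ⟦X⟧) = 0 := rfl
  rw [mk_zero, map_zero, zero_mul, Derivation.map_one_eq_zero]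

lemma hSeries_add (s t : ℕ → ℂ) : hSeries (s + t) = hSeries s * hSeries t := by
  refine (eq_hSeries ?_ ?_).symm
  · have mk_add : (mk (s + t) : ℂ⟦X⟧) = mk s + mk t := rfl
    rw [mk_add, map_add, Derivation.leibniz, derivative_hSeries, derivative_hSeries, smul_eq_mul,
      smul_eq_mul]
    ring
  · rw [map_mul, constantCoeff_hSeries, constantCoeff_hSeries, one_mul]

lemma rescale_hSeries (a : ℂ) (t : ℕ → ℂ) :
    rescale a (hSeries t) = hSeries fun j ↦ a ^ j * t j := by
  refine eq_hSeries ?_ ?_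
  · rw [← rescale_mk, derivative_rescale, derivative_rescale, derivative_hSeries, map_mul,
      mul_assoc]
  · rw [← coeff_zero_eq_constantCoeff_apply, coeff_rescale, pow_zero, one_mul,
      coeff_zero_eq_constantCoeff_apply, constantCoeff_hSeries]

lemma evalNegHom_hSeries_mul_hSeries {t : ℕ → ℂ} (ht : ∀ j, Even j → t j = 0) :
    evalNegHom (hSeries t) * hSeries t = 1 := by
  rw [evalNegHom, rescale_hSeries, ← hSeries_add, ← hSeries_zero]
  congr 1
  ext j
  rcases Nat.even_or_odd j with hj | hj
  · simp [ht j hj]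
  · simp [hj.neg_one_pow]

lemma hSeries_two_pow_pred_mul_sq {t : ℕ → ℂ} (ht₀ : t 0 = 0) :
    hSeries (fun j ↦ 2 ^ (j - 1) * t j) ^ 2 = rescale 2 (hSeries t) := by
  rw [sq, ← hSeries_add, rescale_hSeries]
  congr 1
  ext j
  cases j with
  | zero => simp [ht₀]
  | succ j =>
    simp only [Pi.add_apply, Nat.add_sub_cancel]
    ring

lemma hZ_eq_coeff_hSeries (t : ℕ → ℂ) (m : ℤ) : hZ t m = (hSeries t : ℂ⸨X⸩).coeff m := by
  rw [hZ, coeff_coe, hSeries, coeff_mk]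
  split_ifs with hm
  · rfl
  · rw [show m.toNat = m.natAbs by omega]

lemma schur_eq_jacobiTrudi_hSeries (ℓ : ℕ) (lam : Fin ℓ → ℕ) (t : ℕ → ℂ) :
    schur ℓ lam t = jacobiTrudi (hSeries t) lam := by
  have index_eq (j k : Fin ℓ) : (lam j : ℤ) - ((j : ℕ) + 1) + ((k : ℕ) + 1) =
      lam j - (j : ℕ) + (k : ℕ) := by ring
  simp only [schur, jacobiTrudi, hZ_eq_coeff_hSeries, index_eq]

end CompleteHomogeneous

end SchurPolynomial

/-- for all times with even-indexed entries zero,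
`s_{δ_n}(t₁, 0, 2² t₃, 0, 2⁴ t₅, ...)² = 2^{n²} s_{(n+1)ⁿ}(t₁, 0, t₃, 0, ...)`,
where `δ_n` is the staircase and `(n+1)ⁿ` the rectangle with `n` rows of length `n+1`. -/
theorem stmt_6 (n : ℕ) (hn : 1 ≤ n) (t : ℕ → ℂ) (ht : ∀ j, Even j → t j = 0) :
    (schur n (fun i => n - (i : ℕ)) (fun j => 2 ^ (j - 1) * t j)) ^ 2
      = 2 ^ (n ^ 2) * schur n (fun _ => n + 1) t := by
  have hs : ∀ j, Even j → (2 : ℂ) ^ (j - 1) * t j = 0 := fun j hj ↦ by rw [ht j hj, mul_zero]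
  have weight : ∑ _j : Fin n, (n + 1) = n + n ^ 2 := by
    rw [Finset.sum_const, Finset.card_univ, Fintype.card_fin, smul_eq_mul]
    ring
  apply mul_left_cancel₀ (pow_ne_zero n (two_ne_zero (α := ℂ)))
  simp only [SchurPolynomial.schur_eq_jacobiTrudi_hSeries]
  rw [SchurPolynomial.two_pow_mul_jacobiTrudi_staircase_sq
      (SchurPolynomial.evalNegHom_hSeries_mul_hSeries hs),
    SchurPolynomial.hSeries_two_pow_pred_mul_sq (ht 0 Even.zero),
    SchurPolynomial.jacobiTrudi_rescale (IsRegular.of_ne_zero two_ne_zero).left,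
    weight, pow_add, mul_assoc]
end
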